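/- Let Ψ be a critical branching mechanism and let (ν_t)_{t>0} be a weakly measurable family of nonzero finite Borel measures on (0,∞). Define φ(t,q) = ∫_{(0,∞)} (1 − e^{−qx}) ν_t(dx). Then (ν_t)_{t>0} is a weak solution of the generalized Smoluchowski equation if and only if ∂_t φ(t,q) = −Ψ(φ(t,q)) for all t > 0 and all q ∈ (0,∞). -/

import Mathlib

open MeasureTheory Set Filter

noncomputable section

/-- A test function: continuous on `(0,∞)`, bounded there, with finite limits
at `0⁺` and at `∞`. -/
def IsTestFun (f : ℝ → ℝ) : Prop :=
  ContinuousOn f (Ioi 0) ∧ (∃ M : ℝ, ∀ x ∈ Ioi (0:ℝ), |f x| ≤ M) ∧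
    (∃ l₀ : ℝ, Tendsto f (nhdsWithin 0 (Ioi 0)) (nhds l₀)) ∧
    (∃ linf : ℝ, Tendsto f atTop (nhds linf))

/-- `I_k(ν,f) = m^{-k} ∫_{(0,∞)^k} [f(x₁+⋯+x_k) - Σᵢ f(xᵢ)] ν(dx₁)⋯ν(dx_k)`,
where `m = ν((0,∞))`. -/
noncomputable def Ik (k : ℕ) (ν : Measure ℝ) (f : ℝ → ℝ) : ℝ :=
  (∫ x : Fin k → ℝ, (f (∑ i, x i) - ∑ i, f (x i))
      ∂(Measure.pi fun _ : Fin k => ν.restrict (Ioi 0))) /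
    ((ν (Ioi 0)).toReal) ^ k

/-- `⟨L(ν), f⟩ = Σ_{k≥2} ((-m)^k Ψ⁽ᵏ⁾(m)/k!) I_k(ν,f)` with `m = ν((0,∞))`. -/
noncomputable def Lform (Ψ : ℝ → ℝ) (ν : Measure ℝ) (f : ℝ → ℝ) : ℝ :=
  ∑' k : ℕ,
    ((-((ν (Ioi 0)).toReal)) ^ (k + 2) * iteratedDeriv (k + 2) Ψ ((ν (Ioi 0)).toReal) /
        ((k + 2).factorial : ℝ)) * Ik (k + 2) ν f

/-- Weak solution of the generalized Smoluchowski equation. -/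
def IsWeakSolution (Ψ : ℝ → ℝ) (ν : ℝ → Measure ℝ) : Prop :=
  ∀ f : ℝ → ℝ, IsTestFun f → ∀ s t : ℝ, 0 < s → 0 < t →
    ∫ x in Ioi (0:ℝ), f x ∂(ν t)
      = (∫ x in Ioi (0:ℝ), f x ∂(ν s)) + ∫ τ in s..t, Lform Ψ (ν τ) f

open scoped Topology

/-!
For a multiplicative `χ`, such as `χ x = e^{-qx}`, independence gives
`∫ χ(x₁ + ⋯ + x_k) dν^{⊗k} = (∫ χ dν)^k`. The coefficients of `L(ν)` are `π(dx)`-mixtures of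
Poisson probabilities of mean `m x`, plus `β m²` for `k = 2`, so summing over `k` amounts to
evaluating a Poisson generating function, and `⟨L(ν), 1 - χ⟩ = -Ψ(∫ (1 - χ) dν)`. Hence the weak
equation for `1 - e^{-qx}` is the integrated form of `∂ₜφ = -Ψ(φ)`.

Conversely, letting `q → ∞` yields the weak equation for the constant `1`, and by linearity the
weak equation holds for polynomials in `e^{-x}`. These are uniformly dense in the test functions,
and `f ↦ ⟨L(ν), f⟩` has norm at most `2 m Ψ'(m)` for the supremum norm. As the mass `m` decreases
in time, this bound is uniform on `[s, t]`, so the limit passes under the time integral.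
-/

section JumpIntegrals

variable {π : Measure ℝ}

lemma le_mul_min {a C x y : ℝ} (hC : 0 ≤ C) (hx : a ≤ C * x) (hy : a ≤ C * y) :
    a ≤ C * min x y := by
  rw [mul_min_of_nonneg _ _ hC]
  exact le_min hx hy

lemma integrableOn_of_abs_le_mul_min {g : ℝ → ℝ} {C : ℝ}
    (hπ : IntegrableOn (fun x : ℝ => min x (x ^ 2)) (Ioi 0) π)
    (hg : AEStronglyMeasurable g (π.restrict (Ioi 0)))
    (hb : ∀ x, 0 < x → |g x| ≤ C * min x (x ^ 2)) : IntegrableOn g (Ioi 0) π :=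
  (hπ.const_mul C).mono' hg <| (ae_restrict_mem measurableSet_Ioi).mono hb

lemma hasDerivAt_setIntegral_of_abs_le_mul_min (g g' : ℝ → ℝ → ℝ) {u C : ℝ} {s : Set ℝ}
    (hπ : IntegrableOn (fun x : ℝ => min x (x ^ 2)) (Ioi 0) π) (hs : s ∈ 𝓝 u)
    (hg : ∀ v, Continuous (g v)) (hg' : Continuous (g' u)) (hgu : IntegrableOn (g u) (Ioi 0) π)
    (hb : ∀ v ∈ s, ∀ x, 0 < x → |g' v x| ≤ C * min x (x ^ 2))
    (hd : ∀ v x, HasDerivAt (fun v => g v x) (g' v x) v) :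
    HasDerivAt (fun v => ∫ x in Ioi (0 : ℝ), g v x ∂π) (∫ x in Ioi (0 : ℝ), g' u x ∂π) u :=
  (hasDerivAt_integral_of_dominated_loc_of_deriv_le hs
    (Eventually.of_forall fun v => (hg v).aestronglyMeasurable) hgu hg'.aestronglyMeasurable
    ((ae_restrict_mem measurableSet_Ioi).mono fun x hx v hv => hb v hv x hx) (hπ.const_mul C)
    (Eventually.of_forall fun x v _ => hd v x)).2

lemma exp_neg_mul_le_one {u x : ℝ} (hu : 0 ≤ u) (hx : 0 ≤ x) : Real.exp (-(u * x)) ≤ 1 :=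
  Real.exp_le_one_iff.2 (neg_nonpos.2 (mul_nonneg hu hx))

lemma exp_neg_sub_one_add_nonneg (y : ℝ) : 0 ≤ Real.exp (-y) - 1 + y := by
  linarith [Real.one_sub_le_exp_neg y]

lemma exp_neg_sub_one_add_le_sq {y : ℝ} (hy : 0 ≤ y) : Real.exp (-y) - 1 + y ≤ y ^ 2 := by
  have h : (y + 1) * Real.exp (-y) ≤ 1 := by
    calc (y + 1) * Real.exp (-y) ≤ Real.exp y * Real.exp (-y) := by
          gcongr; exact Real.add_one_le_exp y
      _ = 1 := by rw [← Real.exp_add, add_neg_cancel, Real.exp_zero]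
  nlinarith [mul_le_mul_of_nonneg_left (Real.one_sub_le_exp_neg y) hy]

lemma abs_exp_neg_mul_sub_one_add_le {u x : ℝ} (hu : 0 ≤ u) (hx : 0 ≤ x) :
    |Real.exp (-(u * x)) - 1 + u * x| ≤ (u + u ^ 2) * min x (x ^ 2) := by
  rw [abs_of_nonneg (exp_neg_sub_one_add_nonneg _)]
  refine le_mul_min (by positivity) ?_ ?_
  · nlinarith [exp_neg_mul_le_one hu hx, mul_nonneg (sq_nonneg u) hx]
  · nlinarith [exp_neg_sub_one_add_le_sq (mul_nonneg hu hx), mul_nonneg hu (sq_nonneg x)]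

lemma mul_one_sub_exp_neg_mul_nonneg {u x : ℝ} (hu : 0 ≤ u) (hx : 0 ≤ x) :
    0 ≤ x * (1 - Real.exp (-(u * x))) :=
  mul_nonneg hx (sub_nonneg.2 (exp_neg_mul_le_one hu hx))

lemma abs_mul_one_sub_exp_neg_mul_le {u x : ℝ} (hu : 0 ≤ u) (hx : 0 ≤ x) :
    |x * (1 - Real.exp (-(u * x)))| ≤ (1 + u) * min x (x ^ 2) := by
  rw [abs_of_nonneg (mul_one_sub_exp_neg_mul_nonneg hu hx)]
  refine le_mul_min (by positivity) ?_ ?_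
  · nlinarith [Real.exp_pos (-(u * x)), mul_nonneg hu hx]
  · nlinarith [exp_neg_sub_one_add_nonneg (u * x), sq_nonneg x]

lemma pow_mul_exp_neg_mul_le (n : ℕ) {c u x : ℝ} (hc : 0 < c) (hcu : c ≤ u) (hx : 0 ≤ x) :
    x ^ n * Real.exp (-(u * x)) ≤ n.factorial / c ^ n := by
  have hexp : (c * x) ^ n ≤ Real.exp (u * x) * n.factorial := by
    rw [← div_le_iff₀ (by positivity)]
    exact (Real.pow_div_factorial_le_exp (c * x) (by positivity) n).trans (by gcongr)
  rw [le_div_iff₀ (by positivity), Real.exp_neg, ← div_eq_mul_inv, div_mul_eq_mul_div,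
    div_le_iff₀ (Real.exp_pos _)]
  linarith [mul_pow c x n]

lemma exists_abs_pow_mul_exp_neg_mul_le (n : ℕ) {c : ℝ} (hc : 0 < c) :
    ∃ C : ℝ, ∀ u, c ≤ u → ∀ x, 0 < x →
      |x ^ (n + 2) * Real.exp (-(u * x))| ≤ C * min x (x ^ 2) := by
  refine ⟨(n + 1).factorial / c ^ (n + 1) + n.factorial / c ^ n, fun u hu x hx => ?_⟩
  have h₁ := pow_mul_exp_neg_mul_le (n + 1) hc hu hx.le
  have h₂ := pow_mul_exp_neg_mul_le n hc hu hx.le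
  rw [abs_of_nonneg (by positivity)]
  refine le_mul_min (by positivity) ?_ ?_
  · calc x ^ (n + 2) * Real.exp (-(u * x)) = x ^ (n + 1) * Real.exp (-(u * x)) * x := by ring
      _ ≤ _ := by gcongr; exact h₁.trans (le_add_of_nonneg_right (by positivity))
  · calc x ^ (n + 2) * Real.exp (-(u * x)) = x ^ n * Real.exp (-(u * x)) * x ^ 2 := by ring
      _ ≤ _ := by gcongr; exact h₂.trans (le_add_of_nonneg_left (by positivity))

lemma hasDerivAt_exp_neg_mul_const (v x : ℝ) :
    HasDerivAt (fun v => Real.exp (-(v * x))) (-(x * Real.exp (-(v * x)))) v := by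
  simpa [mul_comm] using (hasDerivAt_mul_const x (x := v)).neg.exp

lemma hasDerivAt_setIntegral_exp_neg_sub_one_add
    (hπ : IntegrableOn (fun x : ℝ => min x (x ^ 2)) (Ioi 0) π) {u : ℝ} (hu : 0 < u) :
    HasDerivAt (fun v => ∫ x in Ioi (0 : ℝ), (Real.exp (-(v * x)) - 1 + v * x) ∂π)
      (∫ x in Ioi (0 : ℝ), x * (1 - Real.exp (-(u * x))) ∂π) u := by
  refine hasDerivAt_setIntegral_of_abs_le_mul_min (fun v x => Real.exp (-(v * x)) - 1 + v * x)
    (fun v x => x * (1 - Real.exp (-(v * x)))) (C := 1 + 2 * u) hπ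
    (Ioo_mem_nhds hu (by linarith : u < 2 * u)) (fun v => by fun_prop) (by fun_prop)
    (integrableOn_of_abs_le_mul_min hπ (by fun_prop) fun x hx =>
      abs_exp_neg_mul_sub_one_add_le hu.le hx.le) (fun v hv x hx => ?_) fun v x => ?_
  · exact (abs_mul_one_sub_exp_neg_mul_le hv.1.le hx.le).trans (by gcongr; exact hv.2.le)
  · exact (((hasDerivAt_exp_neg_mul_const v x).sub_const 1).add
      (hasDerivAt_mul_const x)).congr_deriv (by ring)

lemma integrableOn_mul_one_sub_exp_neg
    (hπ : IntegrableOn (fun x : ℝ => min x (x ^ 2)) (Ioi 0) π) {u : ℝ} (hu : 0 ≤ u) :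
    IntegrableOn (fun x => x * (1 - Real.exp (-(u * x)))) (Ioi 0) π :=
  integrableOn_of_abs_le_mul_min hπ (by fun_prop) fun _ hx =>
    abs_mul_one_sub_exp_neg_mul_le hu hx.le

lemma hasDerivAt_setIntegral_mul_one_sub_exp_neg
    (hπ : IntegrableOn (fun x : ℝ => min x (x ^ 2)) (Ioi 0) π) {u : ℝ} (hu : 0 < u) :
    HasDerivAt (fun v => ∫ x in Ioi (0 : ℝ), x * (1 - Real.exp (-(v * x))) ∂π)
      (∫ x in Ioi (0 : ℝ), x ^ 2 * Real.exp (-(u * x)) ∂π) u := by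
  obtain ⟨C, hC⟩ := exists_abs_pow_mul_exp_neg_mul_le 0 (half_pos hu)
  exact hasDerivAt_setIntegral_of_abs_le_mul_min (fun v x => x * (1 - Real.exp (-(v * x))))
    (fun v x => x ^ 2 * Real.exp (-(v * x))) hπ (Ici_mem_nhds (half_lt_self hu))
    (fun v => by fun_prop) (by fun_prop) (integrableOn_mul_one_sub_exp_neg hπ hu.le) hC
    fun v x => (((hasDerivAt_exp_neg_mul_const v x).const_sub 1).const_mul x).congr_deriv (by ring)

lemma hasDerivAt_setIntegral_pow_mul_exp_neg
    (hπ : IntegrableOn (fun x : ℝ => min x (x ^ 2)) (Ioi 0) π) (n : ℕ) {u : ℝ} (hu : 0 < u) :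
    HasDerivAt (fun v => ∫ x in Ioi (0 : ℝ), x ^ (n + 2) * Real.exp (-(v * x)) ∂π)
      (-∫ x in Ioi (0 : ℝ), x ^ (n + 3) * Real.exp (-(u * x)) ∂π) u := by
  obtain ⟨C, hC⟩ := exists_abs_pow_mul_exp_neg_mul_le n hu
  obtain ⟨C', hC'⟩ := exists_abs_pow_mul_exp_neg_mul_le (n + 1) (half_pos hu)
  rw [← integral_neg]
  refine hasDerivAt_setIntegral_of_abs_le_mul_min (fun v x => x ^ (n + 2) * Real.exp (-(v * x)))
    (fun v x => -(x ^ (n + 3) * Real.exp (-(v * x)))) (C := C') hπ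
    (Ici_mem_nhds (half_lt_self hu)) (fun v => by fun_prop) (by fun_prop)
    (integrableOn_of_abs_le_mul_min hπ (by fun_prop) (hC u le_rfl)) (fun v hv x hx => ?_)
    fun v x => ?_
  · rw [abs_neg]
    exact hC' v hv x hx
  · exact ((hasDerivAt_exp_neg_mul_const v x).const_mul (x ^ (n + 2))).congr_deriv (by ring)

end JumpIntegrals

section Poisson

/-- The Poisson probability `P(N = k)` for a variable `N` of mean `y`, as a function of a real
parameter `y`; the merger rates of a branching mechanism are mixtures of these. -/
def poissonWeight (y : ℝ) (k : ℕ) : ℝ := y ^ k / k.factorial * Real.exp (-y)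

lemma poissonWeight_nonneg {y : ℝ} (hy : 0 ≤ y) (k : ℕ) : 0 ≤ poissonWeight y k := by
  unfold poissonWeight; positivity

@[fun_prop]
lemma continuous_poissonWeight (k : ℕ) : Continuous fun y => poissonWeight y k := by
  unfold poissonWeight; fun_prop

lemma hasSum_poissonWeight_mul_pow (y s : ℝ) :
    HasSum (fun k => poissonWeight y k * s ^ k) (Real.exp (-(y * (1 - s)))) := by
  have h := (NormedSpace.expSeries_div_hasSum_exp (y * s)).mul_right (Real.exp (-y))
  rw [← Real.exp_eq_exp_ℝ, ← Real.exp_add] at h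
  convert! h using 1
  · ext k; rw [poissonWeight, mul_pow]; ring
  · congr 1; ring

lemma hasSum_poissonWeight (y : ℝ) : HasSum (poissonWeight y) 1 := by
  simpa using hasSum_poissonWeight_mul_pow y 1

lemma hasSum_poissonWeight_mul_natCast (y : ℝ) :
    HasSum (fun k => poissonWeight y k * k) y := by
  have hsucc (k : ℕ) : poissonWeight y (k + 1) * (k + 1 : ℕ) = y * poissonWeight y k := by
    rw [poissonWeight, poissonWeight, Nat.factorial_succ]
    push_cast
    field_simp
    ring
  rw [← hasSum_nat_add_iff' 1]
  simpa only [hsucc, Finset.sum_range_one, Nat.cast_zero, mul_zero, sub_zero, mul_one]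
    using (hasSum_poissonWeight y).mul_left y

lemma hasSum_poissonWeight_add_two_mul_natCast (y : ℝ) :
    HasSum (fun k : ℕ => poissonWeight y (k + 2) * (k + 2 : ℕ)) (y * (1 - Real.exp (-y))) := by
  convert! (hasSum_nat_add_iff' 2).2 (hasSum_poissonWeight_mul_natCast y) using 1
  simp only [Finset.sum_range_succ, Finset.sum_range_zero, poissonWeight, Nat.factorial_one,
    Nat.cast_zero, Nat.cast_one, mul_zero, pow_one, div_one, mul_one, zero_add]
  ring

/-- The value of `Ik k` at `1 - χ`, for `χ` multiplicative: the change of the sum of `1 - χ`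
caused by merging `k` independent particles, each with `𝔼 χ = 1 - r`. -/
def mergeIncrement (r : ℝ) (k : ℕ) : ℝ := 1 - (1 - r) ^ k - k * r

lemma abs_mergeIncrement_le {r : ℝ} (h0 : 0 ≤ r) (h1 : r ≤ 1) (k : ℕ) :
    |mergeIncrement r k| ≤ k := by
  have hbernoulli := one_add_mul_le_pow (by linarith : -2 ≤ -r) k
  have hpow : (1 - r) ^ k ≤ 1 := pow_le_one₀ (by linarith) (by linarith)
  have hkr : k * r ≤ (k : ℝ) := mul_le_of_le_one_right k.cast_nonneg h1
  rw [← sub_eq_add_neg] at hbernoulli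
  rw [mergeIncrement, abs_le]
  constructor <;> linarith [(k.cast_nonneg : (0 : ℝ) ≤ k)]

lemma hasSum_poissonWeight_add_two_mul_mergeIncrement (y r : ℝ) :
    HasSum (fun k => poissonWeight y (k + 2) * mergeIncrement r (k + 2))
      (-(Real.exp (-(r * y)) - 1 + r * y)) := by
  have h : HasSum (fun k => poissonWeight y k * mergeIncrement r k)
      (1 - Real.exp (-(y * (1 - (1 - r)))) - y * r) := by
    convert! ((hasSum_poissonWeight y).sub (hasSum_poissonWeight_mul_pow y (1 - r))).sub
      ((hasSum_poissonWeight_mul_natCast y).mul_right r) using 2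
    rw [mergeIncrement]; ring
  convert! (hasSum_nat_add_iff' 2).2 h using 1
  simp only [Finset.sum_range_succ, Finset.sum_range_zero, mergeIncrement, pow_zero, pow_one,
    Nat.cast_zero, Nat.cast_one, sub_sub_cancel, mul_comm r]
  ring

lemma hasSum_setIntegral_poissonWeight_mul {π : Measure ℝ}
    (hπ : IntegrableOn (fun x : ℝ => min x (x ^ 2)) (Ioi 0) π) {m : ℝ} (hm : 0 ≤ m)
    {c : ℕ → ℝ} (hc : ∀ k, |c k| ≤ k) {S : ℝ → ℝ}
    (hS : ∀ x, HasSum (fun k => poissonWeight (m * x) (k + 2) * c (k + 2)) (S x)) :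
    HasSum (fun k => (∫ x in Ioi (0 : ℝ), poissonWeight (m * x) (k + 2) ∂π) * c (k + 2))
      (∫ x in Ioi (0 : ℝ), S x ∂π) := by
  have hmean (x : ℝ) := hasSum_poissonWeight_add_two_mul_natCast (m * x)
  simp_rw [← integral_mul_const]
  refine hasSum_integral_of_dominated_convergence
    (fun (k : ℕ) x => poissonWeight (m * x) (k + 2) * (k + 2 : ℕ))
    (fun k => (by fun_prop : Continuous _).aestronglyMeasurable) (fun k => ?_)
    (Eventually.of_forall fun x => (hmean x).summable) ?_ (Eventually.of_forall hS)
  · filter_upwards [ae_restrict_mem measurableSet_Ioi] with x (hx : 0 < x)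
    have hw := poissonWeight_nonneg (mul_nonneg hm hx.le) (k + 2)
    rw [norm_mul, Real.norm_of_nonneg hw]
    exact mul_le_mul_of_nonneg_left (hc (k + 2)) hw
  · simp_rw [fun x => (hmean x).tsum_eq, mul_assoc]
    exact (integrableOn_mul_one_sub_exp_neg hπ hm).const_mul m

end Poisson

/-- `Ψ` is the critical branching mechanism with quadratic coefficient `β` and jump measure `π`;
only the restriction of `Ψ` to `(0,∞)` is prescribed. -/
structure IsBranchingMechanism (Ψ : ℝ → ℝ) (β : ℝ) (π : Measure ℝ) : Prop where
  nonneg_coeff : 0 ≤ β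
  lintegral_min_lt_top : ∫⁻ x in Ioi (0 : ℝ), ENNReal.ofReal (min x (x ^ 2)) ∂π < ⊤
  eq_of_pos : ∀ u : ℝ, 0 < u →
    Ψ u = β * u ^ 2 + ∫ x in Ioi (0 : ℝ), (Real.exp (-(u * x)) - 1 + u * x) ∂π

/-- The coefficient of `Ik k` in `Lform`: the total rate of `k`-fold mergers in a population of
total mass `m`. -/
def coagRate (Ψ : ℝ → ℝ) (m : ℝ) (k : ℕ) : ℝ :=
  (-m) ^ k * iteratedDeriv k Ψ m / k.factorial

namespace IsBranchingMechanism

variable {Ψ : ℝ → ℝ} {β : ℝ} {π : Measure ℝ} {u m φ : ℝ}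

lemma integrableOn_min (h : IsBranchingMechanism Ψ β π) :
    IntegrableOn (fun x : ℝ => min x (x ^ 2)) (Ioi 0) π := by
  refine (lintegral_ofReal_ne_top_iff_integrable (by fun_prop) ?_).1 h.lintegral_min_lt_top.ne
  filter_upwards [ae_restrict_mem measurableSet_Ioi] with x (hx : 0 < x)
  exact le_min hx.le (sq_nonneg x)

protected lemma hasDerivAt (h : IsBranchingMechanism Ψ β π) (hu : 0 < u) :
    HasDerivAt Ψ (2 * β * u + ∫ x in Ioi (0 : ℝ), x * (1 - Real.exp (-(u * x))) ∂π) u := by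
  have hsum := ((hasDerivAt_pow 2 u).const_mul β).add
    (hasDerivAt_setIntegral_exp_neg_sub_one_add h.integrableOn_min hu)
  refine (hsum.congr_of_eventuallyEq ?_).congr_deriv (by push_cast; ring)
  filter_upwards [Ioi_mem_nhds hu] with v hv using h.eq_of_pos v hv

protected lemma continuousOn (h : IsBranchingMechanism Ψ β π) : ContinuousOn Ψ (Ioi 0) :=
  fun _ hu => (h.hasDerivAt hu).continuousAt.continuousWithinAt

protected lemma nonneg (h : IsBranchingMechanism Ψ β π) (hu : 0 < u) : 0 ≤ Ψ u := by
  rw [h.eq_of_pos u hu]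
  exact add_nonneg (mul_nonneg h.nonneg_coeff (sq_nonneg u))
    (integral_nonneg fun x => exp_neg_sub_one_add_nonneg _)

lemma deriv_nonneg (h : IsBranchingMechanism Ψ β π) (hu : 0 < u) : 0 ≤ deriv Ψ u := by
  rw [(h.hasDerivAt hu).deriv]
  exact add_nonneg (mul_nonneg (mul_nonneg zero_le_two h.nonneg_coeff) hu.le)
    (setIntegral_nonneg measurableSet_Ioi fun x hx =>
      mul_one_sub_exp_neg_mul_nonneg hu.le (mem_Ioi.1 hx).le)

protected lemma monotoneOn (h : IsBranchingMechanism Ψ β π) : MonotoneOn Ψ (Ioi 0) := by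
  refine monotoneOn_of_deriv_nonneg (convex_Ioi 0) h.continuousOn ?_ ?_ <;> rw [interior_Ioi]
  · exact fun u hu => (h.hasDerivAt hu).differentiableAt.differentiableWithinAt
  · exact fun u hu => h.deriv_nonneg hu

lemma monotoneOn_deriv (h : IsBranchingMechanism Ψ β π) : MonotoneOn (deriv Ψ) (Ioi 0) := by
  intro u (hu : 0 < u) v (hv : 0 < v) huv
  rw [(h.hasDerivAt hu).deriv, (h.hasDerivAt hv).deriv]
  have hβ := h.nonneg_coeff
  gcongr 2 * β * ?_ + ?_
  refine setIntegral_mono_on (integrableOn_mul_one_sub_exp_neg h.integrableOn_min hu.le)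
    (integrableOn_mul_one_sub_exp_neg h.integrableOn_min hv.le) measurableSet_Ioi
    fun x (hx : 0 < x) => ?_
  gcongr

lemma iteratedDeriv_add_two (h : IsBranchingMechanism Ψ β π) (n : ℕ) (hu : 0 < u) :
    iteratedDeriv (n + 2) Ψ u = (if n = 0 then 2 * β else 0) +
      (-1) ^ n * ∫ x in Ioi (0 : ℝ), x ^ (n + 2) * Real.exp (-(u * x)) ∂π := by
  induction n generalizing u with
  | zero =>
    have hderiv : deriv Ψ =ᶠ[𝓝 u]
        fun v => 2 * β * v + ∫ x in Ioi (0 : ℝ), x * (1 - Real.exp (-(v * x))) ∂π := by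
      filter_upwards [Ioi_mem_nhds hu] with v hv using (h.hasDerivAt hv).deriv
    rw [iteratedDeriv_succ, iteratedDeriv_one, hderiv.deriv_eq,
      (((hasDerivAt_id' u).const_mul (2 * β)).fun_add
        (hasDerivAt_setIntegral_mul_one_sub_exp_neg h.integrableOn_min hu)).deriv]
    simp
  | succ n ih =>
    have hderiv : iteratedDeriv (n + 2) Ψ =ᶠ[𝓝 u] fun v => (if n = 0 then 2 * β else 0) +
        (-1) ^ n * ∫ x in Ioi (0 : ℝ), x ^ (n + 2) * Real.exp (-(v * x)) ∂π := by
      filter_upwards [Ioi_mem_nhds hu] with v hv using ih hv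
    rw [iteratedDeriv_succ, hderiv.deriv_eq,
      (((hasDerivAt_setIntegral_pow_mul_exp_neg h.integrableOn_min n hu).const_mul
        ((-1) ^ n)).const_add _).deriv, if_neg n.succ_ne_zero, pow_succ]
    ring

lemma coagRate_add_two_eq (h : IsBranchingMechanism Ψ β π) (hm : 0 < m) (k : ℕ) :
    coagRate Ψ m (k + 2) = (if k = 0 then β * m ^ 2 else 0) +
      ∫ x in Ioi (0 : ℝ), poissonWeight (m * x) (k + 2) ∂π := by
  have hweight (x : ℝ) : poissonWeight (m * x) (k + 2) =
      m ^ (k + 2) / (k + 2).factorial * (x ^ (k + 2) * Real.exp (-(m * x))) := by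
    rw [poissonWeight, mul_pow]; ring
  have hsign : (-m) ^ (k + 2) * (-1) ^ k = m ^ (k + 2) := by
    rw [pow_add, mul_right_comm, ← mul_pow]; ring
  simp_rw [hweight]
  rw [integral_const_mul, coagRate, h.iteratedDeriv_add_two k hm, mul_add, ← mul_assoc, hsign]
  split_ifs with hk
  · simp only [hk, zero_add, Nat.factorial_two, Nat.cast_ofNat]
    ring
  · ring

lemma coagRate_add_two_nonneg (h : IsBranchingMechanism Ψ β π) (hm : 0 < m) (k : ℕ) :
    0 ≤ coagRate Ψ m (k + 2) := by
  have hβ := h.nonneg_coeff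
  rw [h.coagRate_add_two_eq hm]
  exact add_nonneg (by split_ifs <;> positivity) (setIntegral_nonneg measurableSet_Ioi
    fun x hx => poissonWeight_nonneg (mul_nonneg hm.le (mem_Ioi.1 hx).le) _)

lemma hasSum_coagRate_mul (h : IsBranchingMechanism Ψ β π) (hm : 0 < m) {c : ℕ → ℝ}
    (hc : ∀ k, |c k| ≤ k) {S : ℝ → ℝ}
    (hS : ∀ x, HasSum (fun k => poissonWeight (m * x) (k + 2) * c (k + 2)) (S x)) :
    HasSum (fun k => coagRate Ψ m (k + 2) * c (k + 2))
      (β * m ^ 2 * c 2 + ∫ x in Ioi (0 : ℝ), S x ∂π) := by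
  convert! (hasSum_ite_eq 0 (β * m ^ 2 * c 2)).add
    (hasSum_setIntegral_poissonWeight_mul h.integrableOn_min hm.le hc hS) using 2 with k
  rw [h.coagRate_add_two_eq hm, add_mul]
  split_ifs with hk
  · rw [hk]
  · rw [zero_mul]

lemma hasSum_coagRate_mul_natCast (h : IsBranchingMechanism Ψ β π) (hm : 0 < m) :
    HasSum (fun k : ℕ => coagRate Ψ m (k + 2) * (k + 2 : ℕ)) (m * deriv Ψ m) := by
  convert! h.hasSum_coagRate_mul hm (fun k => (Nat.abs_cast k).le)
    (fun x => hasSum_poissonWeight_add_two_mul_natCast (m * x)) using 1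
  simp_rw [(h.hasDerivAt hm).deriv, mul_assoc m, integral_const_mul]
  push_cast
  ring

lemma hasSum_coagRate_mul_mergeIncrement (h : IsBranchingMechanism Ψ β π) (hφ : 0 < φ)
    (hφm : φ ≤ m) :
    HasSum (fun k => coagRate Ψ m (k + 2) * mergeIncrement (φ / m) (k + 2)) (-Ψ φ) := by
  have hm := hφ.trans_le hφm
  convert! h.hasSum_coagRate_mul hm
    (abs_mergeIncrement_le (div_nonneg hφ.le hm.le) ((div_le_one hm).2 hφm))
    (fun x => hasSum_poissonWeight_add_two_mul_mergeIncrement (m * x) (φ / m)) using 1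
  have hcancel (x : ℝ) : φ / m * (m * x) = φ * x := by field_simp
  simp_rw [hcancel]
  rw [integral_neg, h.eq_of_pos φ hφ, mergeIncrement]
  field_simp
  ring

end IsBranchingMechanism

section Coagulation

variable {μ : Measure ℝ} {f g χ : ℝ → ℝ} {M : ℝ} {k : ℕ}

/-- The change of the total `f`-content `∑ i, f (x i)` when particles of sizes `x i` merge into
one: the integrand of `Ik`. -/
def coagIncrement (k : ℕ) (f : ℝ → ℝ) (x : Fin k → ℝ) : ℝ := f (∑ i, x i) - ∑ i, f (x i)

lemma abs_coagIncrement_le [NeZero k] (hM : ∀ x, 0 < x → |f x| ≤ M) {x : Fin k → ℝ}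
    (hx : ∀ i, 0 < x i) : |coagIncrement k f x| ≤ k * (2 * M) := by
  have hM0 : 0 ≤ M := (abs_nonneg _).trans (hM 1 one_pos)
  have hk : (1 : ℝ) ≤ k := mod_cast NeZero.one_le
  have hmerged : |f (∑ i, x i)| ≤ M := hM _ (Finset.sum_pos (fun i _ => hx i) Finset.univ_nonempty)
  have hparts : |∑ i, f (x i)| ≤ k * M := by
    simpa using (Finset.abs_sum_le_sum_abs (fun i => f (x i)) Finset.univ).trans
      (Finset.sum_le_sum fun i _ => hM _ (hx i))
  linarith [abs_sub (f (∑ i, x i)) (∑ i, f (x i)), le_mul_of_one_le_left hM0 hk,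
    show |coagIncrement k f x| = |f (∑ i, x i) - ∑ i, f (x i)| from rfl]

lemma Ik_eq_integral_coagIncrement : Ik k μ f =
    (∫ x, coagIncrement k f x ∂(Measure.pi fun _ => μ.restrict (Ioi 0))) / μ.real (Ioi 0) ^ k :=
  rfl

lemma Ik_linear_combination
    (hf : Integrable (coagIncrement k f) (Measure.pi fun _ => μ.restrict (Ioi 0)))
    (hg : Integrable (coagIncrement k g) (Measure.pi fun _ => μ.restrict (Ioi 0))) (a b : ℝ) :
    Ik k μ (fun x => a * f x + b * g x) = a * Ik k μ f + b * Ik k μ g := by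
  have hcoag : coagIncrement k (fun x => a * f x + b * g x) =
      fun x => a * coagIncrement k f x + b * coagIncrement k g x := by
    ext x
    simp only [coagIncrement, Finset.sum_add_distrib, ← Finset.mul_sum]
    ring
  simp only [Ik_eq_integral_coagIncrement]
  rw [hcoag, integral_add (hf.const_mul a) (hg.const_mul b), integral_const_mul,
    integral_const_mul]
  ring

lemma apply_sum_eq_prod_of_apply_add (hχ : ∀ x y, χ (x + y) = χ x * χ y) [NeZero k]
    (x : Fin k → ℝ) : χ (∑ i, x i) = ∏ i, χ (x i) := by
  obtain ⟨k, rfl⟩ := Nat.exists_eq_succ_of_ne_zero (NeZero.ne k)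
  induction k with
  | zero => simp
  | succ k ih => rw [Fin.sum_univ_succ, hχ, ih, ← Fin.prod_univ_succ fun i => χ (x i)]

variable [IsFiniteMeasure μ]

lemma ae_pi_restrict_Ioi_pos :
    ∀ᵐ x ∂(Measure.pi fun _ : Fin k => μ.restrict (Ioi 0)), ∀ i, 0 < x i :=
  ae_all_iff.2 fun i =>
    (Measure.tendsto_eval_ae_ae (μ := fun _ : Fin k => μ.restrict (Ioi 0)) (i := i)).eventually
      (ae_restrict_mem measurableSet_Ioi)

lemma integrable_coagIncrement [NeZero k] (hf : ContinuousOn f (Ioi 0))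
    (hM : ∀ x, 0 < x → |f x| ≤ M) :
    Integrable (coagIncrement k f) (Measure.pi fun _ : Fin k => μ.restrict (Ioi 0)) := by
  refine Integrable.of_bound ?_ (k * (2 * M))
    (ae_pi_restrict_Ioi_pos.mono fun x hx => abs_coagIncrement_le hM hx)
  rw [← Measure.restrict_pi_pi]
  refine ContinuousOn.aestronglyMeasurable ?_ (MeasurableSet.univ_pi fun _ => measurableSet_Ioi)
  refine (hf.comp (by fun_prop) fun x hx => ?_).sub
    (continuousOn_finsetSum _ fun i _ => hf.comp (by fun_prop) fun x hx => hx i (mem_univ i))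
  exact Finset.sum_pos (fun i _ => mem_Ioi.1 (hx i (mem_univ i))) Finset.univ_nonempty

lemma measureReal_pi_restrict_univ :
    (Measure.pi fun _ : Fin k => μ.restrict (Ioi 0)).real univ = μ.real (Ioi 0) ^ k := by
  simp [Measure.real, Measure.pi_univ]

lemma abs_Ik_le [NeZero k] (hM : ∀ x, 0 < x → |f x| ≤ M) : |Ik k μ f| ≤ k * (2 * M) := by
  have hM0 : 0 ≤ M := (abs_nonneg _).trans (hM 1 one_pos)
  have hint : ‖∫ x, coagIncrement k f x ∂(Measure.pi fun _ => μ.restrict (Ioi 0))‖ ≤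
      k * (2 * M) * (Measure.pi fun _ : Fin k => μ.restrict (Ioi 0)).real univ :=
    norm_integral_le_of_norm_le_const
      (ae_pi_restrict_Ioi_pos.mono fun x hx => abs_coagIncrement_le hM hx)
  rw [measureReal_pi_restrict_univ] at hint
  rw [Ik_eq_integral_coagIncrement, ← Real.norm_eq_abs, norm_div,
    Real.norm_of_nonneg (pow_nonneg measureReal_nonneg k)]
  exact div_le_of_le_mul₀ (by positivity) (by positivity) hint

lemma integral_pi_restrict_eval (hf : IntegrableOn f (Ioi 0) μ) (i : Fin k) :
    ∫ x : Fin k → ℝ, f (x i) ∂(Measure.pi fun _ => μ.restrict (Ioi 0)) =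
      μ.real (Ioi 0) ^ (k - 1) * ∫ x in Ioi (0 : ℝ), f x ∂μ := by
  have hmap := Measure.pi_map_eval (μ := fun _ : Fin k => μ.restrict (Ioi 0)) i
  rw [← integral_map (φ := Function.eval i) (measurable_pi_apply i).aemeasurable
    (hmap ▸ hf.aestronglyMeasurable.smul_measure _), hmap, integral_smul_measure]
  simp [Measure.real, Finset.card_erase_of_mem]

lemma integral_coagIncrement_one_sub (hχ : ∀ x y, χ (x + y) = χ x * χ y)
    (hint : IntegrableOn χ (Ioi 0) μ) [NeZero k] :
    ∫ x, coagIncrement k (fun y => 1 - χ y) x ∂(Measure.pi fun _ => μ.restrict (Ioi 0)) =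
      μ.real (Ioi 0) ^ k - (∫ x in Ioi (0 : ℝ), χ x ∂μ) ^ k -
        k * (μ.real (Ioi 0) ^ (k - 1) * ∫ x in Ioi (0 : ℝ), (1 - χ x) ∂μ) := by
  have hone : IntegrableOn (fun x => 1 - χ x) (Ioi 0) μ := (integrable_const 1).sub hint
  have hprod := Integrable.fintype_prod (ι := Fin k) (f := fun _ => χ) fun _ => hint
  have hdiff : Integrable (fun x : Fin k → ℝ => 1 - ∏ i, χ (x i))
      (Measure.pi fun _ => μ.restrict (Ioi 0)) := (integrable_const 1).sub hprod
  have heval (i : Fin k) := integrable_comp_eval (μ := fun _ : Fin k => μ.restrict (Ioi 0))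
    (i := i) hone
  simp only [coagIncrement, apply_sum_eq_prod_of_apply_add hχ]
  rw [integral_sub hdiff (integrable_finsetSum _ fun i _ => heval i),
    integral_sub (integrable_const 1) hprod, integral_finsetSum _ fun i _ => heval i,
    integral_fintype_prod_eq_pow, integral_const, measureReal_pi_restrict_univ]
  simp [integral_pi_restrict_eval hone]

lemma Ik_one_sub (hχ : ∀ x y, χ (x + y) = χ x * χ y) (hint : IntegrableOn χ (Ioi 0) μ)
    (hm : 0 < μ.real (Ioi 0)) [NeZero k] :
    Ik k μ (fun x => 1 - χ x) =
      mergeIncrement ((∫ x in Ioi (0 : ℝ), (1 - χ x) ∂μ) / μ.real (Ioi 0)) k := by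
  have hsub : ∫ x in Ioi (0 : ℝ), (1 - χ x) ∂μ = μ.real (Ioi 0) - ∫ x in Ioi (0 : ℝ), χ x ∂μ := by
    rw [integral_sub (integrable_const 1) hint]
    simp
  have hpow : μ.real (Ioi 0) ^ k = μ.real (Ioi 0) ^ (k - 1) * μ.real (Ioi 0) :=
    (pow_sub_one_mul (NeZero.ne k) _).symm
  rw [Ik_eq_integral_coagIncrement, integral_coagIncrement_one_sub hχ hint, mergeIncrement,
    one_sub_div hm.ne', show μ.real (Ioi 0) - ∫ x in Ioi (0 : ℝ), (1 - χ x) ∂μ =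
      ∫ x in Ioi (0 : ℝ), χ x ∂μ by rw [hsub]; ring, div_pow, sub_div, sub_div,
    div_self (pow_pos hm k).ne']
  congr 1
  rw [hpow]
  field_simp

end Coagulation

lemma Lform_eq_tsum_coagRate {Ψ : ℝ → ℝ} {μ : Measure ℝ} {f : ℝ → ℝ} :
    Lform Ψ μ f = ∑' k, coagRate Ψ (μ.real (Ioi 0)) (k + 2) * Ik (k + 2) μ f :=
  rfl

namespace IsBranchingMechanism

variable {Ψ : ℝ → ℝ} {β : ℝ} {π μ : Measure ℝ} [IsFiniteMeasure μ] {f g χ : ℝ → ℝ} {M : ℝ}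

lemma norm_coagRate_mul_Ik_le (h : IsBranchingMechanism Ψ β π) (hm : 0 < μ.real (Ioi 0))
    (hM : ∀ x, 0 < x → |f x| ≤ M) (k : ℕ) :
    ‖coagRate Ψ (μ.real (Ioi 0)) (k + 2) * Ik (k + 2) μ f‖ ≤
      coagRate Ψ (μ.real (Ioi 0)) (k + 2) * (k + 2 : ℕ) * (2 * M) := by
  have hrate := h.coagRate_add_two_nonneg hm k
  rw [norm_mul, Real.norm_of_nonneg hrate, Real.norm_eq_abs, mul_assoc]
  exact mul_le_mul_of_nonneg_left (abs_Ik_le hM) hrate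

lemma summable_coagRate_mul_Ik (h : IsBranchingMechanism Ψ β π) (hm : 0 < μ.real (Ioi 0))
    (hM : ∀ x, 0 < x → |f x| ≤ M) :
    Summable fun k => coagRate Ψ (μ.real (Ioi 0)) (k + 2) * Ik (k + 2) μ f :=
  .of_norm_bounded ((h.hasSum_coagRate_mul_natCast hm).summable.mul_right (2 * M))
    (h.norm_coagRate_mul_Ik_le hm hM)

lemma abs_Lform_le (h : IsBranchingMechanism Ψ β π) (hm : 0 < μ.real (Ioi 0))
    (hM : ∀ x, 0 < x → |f x| ≤ M) :
    |Lform Ψ μ f| ≤ μ.real (Ioi 0) * deriv Ψ (μ.real (Ioi 0)) * (2 * M) :=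
  tsum_of_norm_bounded ((h.hasSum_coagRate_mul_natCast hm).mul_right (2 * M))
    (h.norm_coagRate_mul_Ik_le hm hM)

lemma Lform_linear_combination (h : IsBranchingMechanism Ψ β π) (hm : 0 < μ.real (Ioi 0))
    (hf : IsTestFun f) (hg : IsTestFun g) (a b : ℝ) :
    Lform Ψ μ (fun x => a * f x + b * g x) = a * Lform Ψ μ f + b * Lform Ψ μ g := by
  obtain ⟨hfc, ⟨M, hM⟩, -⟩ := hf
  obtain ⟨hgc, ⟨N, hN⟩, -⟩ := hg
  simp only [Lform_eq_tsum_coagRate]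
  rw [← tsum_mul_left, ← tsum_mul_left,
    ← ((h.summable_coagRate_mul_Ik hm hM).mul_left a).tsum_add
      ((h.summable_coagRate_mul_Ik hm hN).mul_left b)]
  refine tsum_congr fun k => ?_
  rw [Ik_linear_combination (integrable_coagIncrement hfc hM) (integrable_coagIncrement hgc hN)]
  ring

lemma Lform_one_sub (h : IsBranchingMechanism Ψ β π) (hχ : ∀ x y, χ (x + y) = χ x * χ y)
    (hint : IntegrableOn χ (Ioi 0) μ) (hpos : 0 < ∫ x in Ioi (0 : ℝ), (1 - χ x) ∂μ)
    (hle : ∫ x in Ioi (0 : ℝ), (1 - χ x) ∂μ ≤ μ.real (Ioi 0)) :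
    Lform Ψ μ (fun x => 1 - χ x) = -Ψ (∫ x in Ioi (0 : ℝ), (1 - χ x) ∂μ) := by
  rw [Lform_eq_tsum_coagRate]
  simp_rw [Ik_one_sub hχ hint (hpos.trans_le hle)]
  exact (h.hasSum_coagRate_mul_mergeIncrement hpos hle).tsum_eq

end IsBranchingMechanism

section TestFunctions

variable {f g : ℝ → ℝ}

lemma IsTestFun.linear_combination (hf : IsTestFun f) (hg : IsTestFun g) (a b : ℝ) :
    IsTestFun fun x => a * f x + b * g x := by
  obtain ⟨hfc, ⟨M, hM⟩, ⟨_, hf0⟩, _, hfi⟩ := hf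
  obtain ⟨hgc, ⟨N, hN⟩, ⟨_, hg0⟩, _, hgi⟩ := hg
  refine ⟨(hfc.const_mul a).add (hgc.const_mul b), ⟨|a| * M + |b| * N, fun x hx => ?_⟩,
    ⟨_, (hf0.const_mul a).add (hg0.const_mul b)⟩, _, (hfi.const_mul a).add (hgi.const_mul b)⟩
  refine (abs_add_le _ _).trans ?_
  rw [abs_mul, abs_mul]
  gcongr
  exacts [hM x hx, hN x hx]

lemma IsTestFun.integrableOn (hf : IsTestFun f) (μ : Measure ℝ) [IsFiniteMeasure μ] :
    IntegrableOn f (Ioi 0) μ := by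
  obtain ⟨hfc, ⟨M, hM⟩, -⟩ := hf
  exact Integrable.of_bound (hfc.aestronglyMeasurable measurableSet_Ioi) M
    ((ae_restrict_mem measurableSet_Ioi).mono hM)

lemma isTestFun_comp_exp_neg (hg : Continuous g) : IsTestFun fun x => g (Real.exp (-x)) := by
  obtain ⟨M, hM⟩ := (isCompact_Icc (a := (0 : ℝ)) (b := 1)).exists_bound_of_continuousOn
    hg.continuousOn
  have hcont : Continuous fun x => g (Real.exp (-x)) := by fun_prop
  exact ⟨hcont.continuousOn, ⟨M, fun x hx => hM _ ⟨(Real.exp_pos _).le,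
    Real.exp_le_one_iff.2 (neg_nonpos.2 (mem_Ioi.1 hx).le)⟩⟩,
    ⟨_, (hcont.tendsto 0).mono_left nhdsWithin_le_nhds⟩,
    _, (hg.tendsto 0).comp Real.tendsto_exp_neg_atTop_nhds_zero⟩

lemma isTestFun_exp_neg_mul {q : ℝ} (hq : 0 ≤ q) : IsTestFun fun x => Real.exp (-(q * x)) := by
  convert isTestFun_comp_exp_neg (Real.continuous_rpow_const hq) using 2 with x
  rw [← Real.exp_mul]
  ring_nf

lemma isTestFun_one : IsTestFun fun _ => 1 := isTestFun_comp_exp_neg continuous_const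

lemma isTestFun_one_sub_exp_neg_mul {q : ℝ} (hq : 0 ≤ q) :
    IsTestFun fun x => 1 - Real.exp (-(q * x)) := by
  simpa [sub_eq_add_neg] using isTestFun_one.linear_combination (isTestFun_exp_neg_mul hq) 1 (-1)

-- In the variable `y = e^{-x}` a test function is continuous on `[0,1]`, so Weierstrass applies.
lemma IsTestFun.exists_polynomial_near (hf : IsTestFun f) {ε : ℝ} (hε : 0 < ε) :
    ∃ p : Polynomial ℝ, ∀ x, 0 < x → |p.eval (Real.exp (-x)) - f x| < ε := by
  obtain ⟨hc, -, ⟨l₀, h₀⟩, linf, hinf⟩ := hf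
  have hlog {y : ℝ} (hy : y ∈ Ioo (0 : ℝ) 1) : 0 < -Real.log y :=
    neg_pos.2 (Real.log_neg hy.1 hy.2)
  have hcont : ContinuousOn (fun y => f (-Real.log y)) (Ioo 0 1) :=
    hc.comp (Real.continuousOn_log.neg.mono fun y hy => hy.1.ne') fun y hy => hlog hy
  have hzero : Tendsto (fun y => f (-Real.log y)) (𝓝[>] 0) (𝓝 linf) :=
    hinf.comp (tendsto_neg_atBot_atTop.comp Real.tendsto_log_nhdsGT_zero)
  have hlog_one : Tendsto (fun y => -Real.log y) (𝓝[<] 1) (𝓝[>] 0) := by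
    refine tendsto_nhdsWithin_iff.2 ⟨?_, ?_⟩
    · simpa using (Real.continuousAt_log one_ne_zero).fun_neg.tendsto.mono_left nhdsWithin_le_nhds
    · filter_upwards [Ioo_mem_nhdsLT zero_lt_one] with y hy using hlog hy
  obtain ⟨p, hp⟩ := exists_polynomial_near_of_continuousOn 0 1 _
    (continuousOn_Icc_extendFrom_Ioo hcont hzero (h₀.comp hlog_one)) ε hε
  refine ⟨p, fun x hx => ?_⟩
  have hmem : Real.exp (-x) ∈ Ioo (0 : ℝ) 1 :=
    ⟨Real.exp_pos _, Real.exp_lt_one_iff.2 (neg_neg_of_pos hx)⟩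
  simpa [extendFrom_extends hcont _ hmem] using hp _ (Ioo_subset_Icc_self hmem)

lemma IsTestFun.exists_polynomial_tendstoUniformlyOn (hf : IsTestFun f) :
    ∃ p : ℕ → Polynomial ℝ,
      TendstoUniformlyOn (fun n x => (p n).eval (Real.exp (-x))) f atTop (Ioi 0) := by
  choose p hp using fun n : ℕ =>
    hf.exists_polynomial_near (Nat.one_div_pos_of_nat (α := ℝ) (n := n))
  refine ⟨p, Metric.tendstoUniformlyOn_iff.2 fun ε hε => ?_⟩
  filter_upwards [tendsto_one_div_add_atTop_nhds_zero_nat.eventually_lt_const hε] with n hn x hx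
  rw [dist_comm]
  exact (hp n x hx).trans hn

lemma eventually_abs_le_add_one_of_tendstoUniformlyOn {F : ℕ → ℝ → ℝ} {M : ℝ}
    (hM : ∀ x, 0 < x → |f x| ≤ M) (hlim : TendstoUniformlyOn F f atTop (Ioi 0)) :
    ∀ᶠ n in atTop, ∀ x, 0 < x → |F n x| ≤ M + 1 := by
  filter_upwards [Metric.tendstoUniformlyOn_iff.1 hlim 1 one_pos] with n hn x hx
  have hdist : |F n x - f x| < 1 := by
    rw [← Real.dist_eq, dist_comm]
    exact hn x hx
  linarith [abs_sub_abs_le_abs_sub (F n x) (f x), hM x hx]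

lemma tendsto_setIntegral_of_tendstoUniformlyOn {μ : Measure ℝ} [IsFiniteMeasure μ]
    {F : ℕ → ℝ → ℝ} (hF : ∀ n, IsTestFun (F n)) (hf : IsTestFun f)
    (hlim : TendstoUniformlyOn F f atTop (Ioi 0)) :
    Tendsto (fun n => ∫ x in Ioi (0 : ℝ), F n x ∂μ) atTop (𝓝 (∫ x in Ioi (0 : ℝ), f x ∂μ)) := by
  obtain ⟨-, ⟨M, hM⟩, -⟩ := hf
  refine tendsto_integral_filter_of_dominated_convergence (fun _ => M + 1)
    (Eventually.of_forall fun n => ((hF n).integrableOn μ).aestronglyMeasurable) ?_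
    (integrable_const _) ?_
  · filter_upwards [eventually_abs_le_add_one_of_tendstoUniformlyOn hM hlim] with n hn
    filter_upwards [ae_restrict_mem measurableSet_Ioi] with x hx using hn x hx
  · filter_upwards [ae_restrict_mem measurableSet_Ioi] with x hx using hlim.tendsto_at hx

end TestFunctions

section LaplaceExponent

/-- The Laplace exponent `φ(q) = ∫ (1 - e^{-qx}) μ(dx)` of a measure on `(0,∞)`. -/
def laplaceExponent (μ : Measure ℝ) (q : ℝ) : ℝ :=
  ∫ x in Ioi (0 : ℝ), (1 - Real.exp (-(q * x))) ∂μ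

variable {μ : Measure ℝ} [IsFiniteMeasure μ] {q : ℝ}

lemma laplaceExponent_pos (hμ : μ (Ioi 0) ≠ 0) (hq : 0 < q) : 0 < laplaceExponent μ q := by
  have hpos (x : ℝ) (hx : x ∈ Ioi 0) : 0 < 1 - Real.exp (-(q * x)) :=
    sub_pos.2 (Real.exp_lt_one_iff.2 (neg_neg_of_pos (mul_pos hq hx)))
  rw [laplaceExponent, setIntegral_pos_iff_support_of_nonneg_ae
    ((ae_restrict_mem measurableSet_Ioi).mono fun x hx => (hpos x hx).le)
    ((isTestFun_one_sub_exp_neg_mul hq.le).integrableOn μ)]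
  exact hμ.bot_lt.trans_le (measure_mono fun x hx => ⟨(hpos x hx).ne', hx⟩)

lemma laplaceExponent_le (hq : 0 ≤ q) : laplaceExponent μ q ≤ μ.real (Ioi 0) := by
  calc laplaceExponent μ q ≤ ∫ _ in Ioi (0 : ℝ), (1 : ℝ) ∂μ :=
        integral_mono ((isTestFun_one_sub_exp_neg_mul hq).integrableOn μ) (integrable_const 1)
          fun x => sub_le_self 1 (Real.exp_pos _).le
    _ = μ.real (Ioi 0) := by simp

lemma tendsto_laplaceExponent_atTop :
    Tendsto (laplaceExponent μ) atTop (𝓝 (μ.real (Ioi 0))) := by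
  have hone : μ.real (Ioi 0) = ∫ _ in Ioi (0 : ℝ), (1 : ℝ) ∂μ := by simp
  rw [hone]
  refine tendsto_integral_filter_of_dominated_convergence (fun _ => 1)
    (Eventually.of_forall fun q => (by fun_prop : Continuous _).aestronglyMeasurable) ?_
    (integrable_const _) ?_
  · filter_upwards [eventually_ge_atTop 0] with q hq
    filter_upwards [ae_restrict_mem measurableSet_Ioi] with x (hx : 0 < x)
    rw [Real.norm_of_nonneg (sub_nonneg.2 (exp_neg_mul_le_one hq hx.le))]
    exact sub_le_self 1 (Real.exp_pos _).le
  · filter_upwards [ae_restrict_mem measurableSet_Ioi] with x (hx : 0 < x)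
    simpa using (Real.tendsto_exp_neg_atTop_nhds_zero.comp
      (tendsto_id.atTop_mul_const hx)).const_sub 1

end LaplaceExponent

namespace IsBranchingMechanism

variable {Ψ : ℝ → ℝ} {β : ℝ} {π μ : Measure ℝ} [IsFiniteMeasure μ] {f : ℝ → ℝ}

lemma Lform_one_sub_exp_neg_mul (h : IsBranchingMechanism Ψ β π) (hμ : μ (Ioi 0) ≠ 0) {q : ℝ}
    (hq : 0 < q) :
    Lform Ψ μ (fun x => 1 - Real.exp (-(q * x))) = -Ψ (laplaceExponent μ q) :=
  h.Lform_one_sub (fun x y => by rw [← Real.exp_add]; ring_nf)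
    ((isTestFun_exp_neg_mul hq.le).integrableOn μ) (laplaceExponent_pos hμ hq)
    (laplaceExponent_le hq.le)

lemma Lform_one (h : IsBranchingMechanism Ψ β π) (hm : 0 < μ.real (Ioi 0)) :
    Lform Ψ μ (fun _ => 1) = -Ψ (μ.real (Ioi 0)) := by
  have hone : ∫ _ in Ioi (0 : ℝ), (1 - 0 : ℝ) ∂μ = μ.real (Ioi 0) := by simp
  have hzero := h.Lform_one_sub (χ := fun _ => 0) (by simp) integrableOn_zero (hone ▸ hm) hone.le
  rwa [hone, sub_zero] at hzero

lemma tendsto_Lform (h : IsBranchingMechanism Ψ β π) (hm : 0 < μ.real (Ioi 0))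
    {F : ℕ → ℝ → ℝ} (hF : ∀ n, IsTestFun (F n)) (hf : IsTestFun f)
    (hlim : TendstoUniformlyOn F f atTop (Ioi 0)) :
    Tendsto (fun n => Lform Ψ μ (F n)) atTop (𝓝 (Lform Ψ μ f)) := by
  have hC : 0 ≤ μ.real (Ioi 0) * deriv Ψ (μ.real (Ioi 0)) := mul_nonneg hm.le (h.deriv_nonneg hm)
  set C := μ.real (Ioi 0) * deriv Ψ (μ.real (Ioi 0))
  refine Metric.tendsto_nhds.2 fun ε hε => ?_
  have hδ : 0 < ε / (2 * (C + 1)) := by positivity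
  filter_upwards [Metric.tendstoUniformlyOn_iff.1 hlim _ hδ] with n hn
  have hdiff : ∀ x, 0 < x → |1 * F n x + -1 * f x| ≤ ε / (2 * (C + 1)) := fun x hx => by
    rw [one_mul, neg_one_mul, ← sub_eq_add_neg, ← Real.dist_eq, dist_comm]
    exact (hn x hx).le
  have hbound := h.abs_Lform_le hm hdiff
  rw [h.Lform_linear_combination hm (hF n) hf, one_mul, neg_one_mul, ← sub_eq_add_neg] at hbound
  calc dist (Lform Ψ μ (F n)) (Lform Ψ μ f) ≤ C * (2 * (ε / (2 * (C + 1)))) := hbound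
    _ = C * ε / (C + 1) := by field_simp
    _ < ε := by rw [div_lt_iff₀ (by positivity)]; linarith

end IsBranchingMechanism

section IndefiniteIntegral

/-- `G` is an indefinite integral of `L` on `(0,∞)`. Interval integrability of `L` is part of the
notion, because the interval integral of a non-integrable function is the junk value `0`. -/
def IsIndefiniteIntegral (G L : ℝ → ℝ) : Prop :=
  ∀ s t : ℝ, 0 < s → 0 < t →
    IntervalIntegrable L volume s t ∧ G t = G s + ∫ τ in s..t, L τ

lemma uIcc_subset_Ioi_zero {s t : ℝ} (hs : 0 < s) (ht : 0 < t) : uIcc s t ⊆ Ioi 0 :=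
  ordConnected_Ioi.uIcc_subset hs ht

namespace IsIndefiniteIntegral

variable {G H L K Ψ : ℝ → ℝ}

lemma congr (hG : IsIndefiniteIntegral G L) (hGH : EqOn G H (Ioi 0)) (hLK : EqOn L K (Ioi 0)) :
    IsIndefiniteIntegral H K := fun s t hs ht => by
  have hLK' := hLK.mono (uIcc_subset_Ioi_zero hs ht)
  obtain ⟨hint, heq⟩ := hG s t hs ht
  rw [← hGH hs, ← hGH ht, ← intervalIntegral.integral_congr hLK']
  exact ⟨hint.congr (hLK'.mono uIoc_subset_uIcc), heq⟩

lemma linear_combination (hG : IsIndefiniteIntegral G L) (hH : IsIndefiniteIntegral H K)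
    (a b : ℝ) :
    IsIndefiniteIntegral (fun t => a * G t + b * H t) fun t => a * L t + b * K t :=
  fun s t hs ht => by
    obtain ⟨hL, hGeq⟩ := hG s t hs ht
    obtain ⟨hK, hHeq⟩ := hH s t hs ht
    refine ⟨(hL.const_mul a).add (hK.const_mul b), ?_⟩
    beta_reduce
    rw [intervalIntegral.integral_add (hL.const_mul a) (hK.const_mul b),
      intervalIntegral.integral_const_mul, intervalIntegral.integral_const_mul, hGeq, hHeq]
    ring

lemma of_hasDerivAt (hderiv : ∀ t, 0 < t → HasDerivAt G (L t) t) (hL : ContinuousOn L (Ioi 0)) :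
    IsIndefiniteIntegral G L := fun s t hs ht => by
  have hsub := uIcc_subset_Ioi_zero hs ht
  have hint : IntervalIntegrable L volume s t := (hL.mono hsub).intervalIntegrable
  refine ⟨hint, ?_⟩
  rw [intervalIntegral.integral_eq_sub_of_hasDerivAt (fun x hx => hderiv x (hsub hx)) hint]
  ring

protected lemma continuousOn (hG : IsIndefiniteIntegral G L) : ContinuousOn G (Ioi 0) := by
  intro t (ht : 0 < t)
  have hhalf : 0 < t / 2 := by positivity
  have hdouble : 0 < 2 * t := by positivity
  have hprim := intervalIntegral.continuousOn_primitive_interval' (hG _ _ hhalf hdouble).1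
    left_mem_uIcc
  have hnhds : uIcc (t / 2) (2 * t) ∈ 𝓝 t := by
    rw [uIcc_of_le (by linarith)]
    exact Icc_mem_nhds (by linarith) (by linarith)
  refine ContinuousAt.continuousWithinAt ?_
  refine ((hprim.continuousAt hnhds).const_add (G (t / 2))).congr ?_
  filter_upwards [Ioi_mem_nhds ht] with r hr using (hG _ _ hhalf hr).2.symm

protected lemma hasDerivAt (hG : IsIndefiniteIntegral G L) (hL : ContinuousOn L (Ioi 0)) {t : ℝ}
    (ht : 0 < t) : HasDerivAt G (L t) t := by
  have hprim := intervalIntegral.integral_hasDerivAt_right (hG t t ht ht).1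
    (hL.stronglyMeasurableAtFilter isOpen_Ioi t ht) (hL.continuousAt (Ioi_mem_nhds ht))
  refine (hprim.const_add (G t)).congr_of_eventuallyEq ?_
  filter_upwards [Ioi_mem_nhds ht] with r hr using (hG t r ht hr).2

lemma antitoneOn (hG : IsIndefiniteIntegral G L) (hL : ∀ t, 0 < t → L t ≤ 0) :
    AntitoneOn G (Ioi 0) := by
  intro s hs t ht hst
  rw [(hG s t hs ht).2]
  have hnonneg := intervalIntegral.integral_nonneg (μ := volume) hst
    fun τ hτ => neg_nonneg.2 (hL τ (lt_of_lt_of_le hs hτ.1))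
  rw [intervalIntegral.integral_neg] at hnonneg
  linarith

lemma of_tendsto {Gs Ls : ℕ → ℝ → ℝ} {B : ℝ → ℝ} (hGs : ∀ n, IsIndefiniteIntegral (Gs n) (Ls n))
    (hB : AntitoneOn B (Ioi 0)) (hbound : ∀ᶠ n in atTop, ∀ t, 0 < t → |Ls n t| ≤ B t)
    (hG : ∀ t, 0 < t → Tendsto (fun n => Gs n t) atTop (𝓝 (G t)))
    (hL : ∀ t, 0 < t → Tendsto (fun n => Ls n t) atTop (𝓝 (L t))) :
    IsIndefiniteIntegral G L := fun s t hs ht => by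
  have hsub : uIoc s t ⊆ Ioi 0 := uIoc_subset_uIcc.trans (uIcc_subset_Ioi_zero hs ht)
  have hBle (τ : ℝ) (hτ : τ ∈ uIoc s t) : B τ ≤ B (min s t) :=
    hB (lt_min hs ht) (hsub hτ) hτ.1.le
  have hmeas (n : ℕ) := (hGs n s t hs ht).1.aestronglyMeasurable_restrict_uIoc
  have hlim : ∀ τ ∈ uIoc s t, Tendsto (fun n => Ls n τ) atTop (𝓝 (L τ)) :=
    fun τ hτ => hL τ (hsub hτ)
  have hLbound : ∀ τ ∈ uIoc s t, ‖L τ‖ ≤ B (min s t) := fun τ hτ =>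
    le_of_tendsto (hlim τ hτ).norm (hbound.mono fun n hn => (hn τ (hsub hτ)).trans (hBle τ hτ))
  have hint : IntervalIntegrable L volume s t :=
    (intervalIntegrable_const (c := B (min s t))).mono_fun'
      (aestronglyMeasurable_of_tendsto_ae atTop hmeas
        ((ae_restrict_mem measurableSet_uIoc).mono hlim))
      ((ae_restrict_mem measurableSet_uIoc).mono hLbound)
  have hintegral : Tendsto (fun n => ∫ τ in s..t, Ls n τ) atTop (𝓝 (∫ τ in s..t, L τ)) :=
    intervalIntegral.tendsto_integral_filter_of_dominated_convergence (fun _ => B (min s t))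
      (Eventually.of_forall hmeas)
      (hbound.mono fun n hn => ae_of_all _ fun τ hτ => (hn τ (hsub hτ)).trans (hBle τ hτ))
      intervalIntegrable_const (ae_of_all _ hlim)
  exact ⟨hint, tendsto_nhds_unique (hG t ht)
    (((hG s hs).add hintegral).congr fun n => (hGs n s t hs ht).2.symm)⟩

lemma of_integral_neg_comp (hΨ : ∀ u, 0 < u → 0 ≤ Ψ u) (hmono : MonotoneOn Ψ (Ioi 0))
    (hpos : ∀ t, 0 < t → 0 < G t)
    (heq : ∀ s t, 0 < s → 0 < t → G t = G s + ∫ τ in s..t, -Ψ (G τ)) :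
    IsIndefiniteIntegral G fun t => -Ψ (G t) := fun s t hs ht => by
  have hanti : AntitoneOn G (Ioi 0) := fun a ha b hb hab => by
    have hnonneg := intervalIntegral.integral_nonneg (μ := volume) hab
      fun τ hτ => hΨ _ (hpos τ (lt_of_lt_of_le ha hτ.1))
    rw [heq a b ha hb, intervalIntegral.integral_neg]
    linarith
  have hcomp : MonotoneOn (fun τ => -Ψ (G τ)) (Ioi 0) := fun a ha b hb hab =>
    neg_le_neg (hmono (hpos b hb) (hpos a ha) (hanti ha hb hab))
  exact ⟨(hcomp.mono (uIcc_subset_Ioi_zero hs ht)).intervalIntegrable, heq s t hs ht⟩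

lemma neg_comp_iff_hasDerivAt (hΨ : ContinuousOn Ψ (Ioi 0)) (hpos : ∀ t, 0 < t → 0 < G t) :
    IsIndefiniteIntegral G (fun t => -Ψ (G t)) ↔
      ∀ t, 0 < t → HasDerivAt G (-Ψ (G t)) t := by
  refine ⟨fun hG t ht => hG.hasDerivAt (hΨ.comp hG.continuousOn hpos).neg ht, fun hderiv => ?_⟩
  have hcont : ContinuousOn G (Ioi 0) := fun t ht =>
    (hderiv t ht).continuousAt.continuousWithinAt
  exact .of_hasDerivAt hderiv (hΨ.comp hcont hpos).neg

end IsIndefiniteIntegral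

end IndefiniteIntegral

section Evolution

/-- The weak equation for the single test function `f`, in a form that also asserts
integrability of its right-hand side. -/
def HasWeakEvolution (Ψ : ℝ → ℝ) (ν : ℝ → Measure ℝ) (f : ℝ → ℝ) : Prop :=
  IsIndefiniteIntegral (fun t => ∫ x in Ioi (0 : ℝ), f x ∂ν t) fun t => Lform Ψ (ν t) f

/-- The equation `∂ₜφ = -Ψ(φ)` for the Laplace exponents of `ν`, in integrated form. -/
def SolvesLaplaceEquation (Ψ : ℝ → ℝ) (ν : ℝ → Measure ℝ) : Prop :=
  ∀ q : ℝ, 0 < q → IsIndefiniteIntegral (fun t => laplaceExponent (ν t) q)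
    fun t => -Ψ (laplaceExponent (ν t) q)

variable {Ψ : ℝ → ℝ} {β : ℝ} {π : Measure ℝ} {ν : ℝ → Measure ℝ} {f g : ℝ → ℝ}

lemma measureReal_Ioi_zero_pos (hfin : ∀ t, 0 < t → IsFiniteMeasure (ν t))
    (hnz : ∀ t, 0 < t → ν t (Ioi 0) ≠ 0) (t : ℝ) (ht : 0 < t) : 0 < (ν t).real (Ioi 0) :=
  have := hfin t ht
  ENNReal.toReal_pos (hnz t ht) (measure_ne_top _ _)

lemma HasWeakEvolution.linear_combination (hΨ : IsBranchingMechanism Ψ β π)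
    (hfin : ∀ t, 0 < t → IsFiniteMeasure (ν t)) (hmass : ∀ t, 0 < t → 0 < (ν t).real (Ioi 0))
    (hf : IsTestFun f) (hg : IsTestFun g) (hfν : HasWeakEvolution Ψ ν f)
    (hgν : HasWeakEvolution Ψ ν g) (a b : ℝ) :
    HasWeakEvolution Ψ ν fun x => a * f x + b * g x := by
  refine IsIndefiniteIntegral.congr (IsIndefiniteIntegral.linear_combination hfν hgν a b)
    (fun t ht => ?_) fun t ht => ?_ <;> have := hfin t ht
  · beta_reduce
    rw [integral_add ((hf.integrableOn _).const_mul a) ((hg.integrableOn _).const_mul b),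
      integral_const_mul, integral_const_mul]
  · exact (hΨ.Lform_linear_combination (hmass t ht) hf hg a b).symm

namespace SolvesLaplaceEquation

lemma antitoneOn_mass (hν : SolvesLaplaceEquation Ψ ν) (hΨ : IsBranchingMechanism Ψ β π)
    (hfin : ∀ t, 0 < t → IsFiniteMeasure (ν t)) (hnz : ∀ t, 0 < t → ν t (Ioi 0) ≠ 0) :
    AntitoneOn (fun t => (ν t).real (Ioi 0)) (Ioi 0) := fun s hs t ht hst => by
  have := hfin s hs
  have := hfin t ht
  refine le_of_tendsto_of_tendsto tendsto_laplaceExponent_atTop tendsto_laplaceExponent_atTop ?_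
  filter_upwards [eventually_gt_atTop 0] with q hq
  refine (hν q hq).antitoneOn (fun r hr => neg_nonpos.2 (hΨ.nonneg ?_)) hs ht hst
  have := hfin r hr
  exact laplaceExponent_pos (hnz r hr) hq

lemma isIndefiniteIntegral_mass (hν : SolvesLaplaceEquation Ψ ν)
    (hΨ : IsBranchingMechanism Ψ β π) (hfin : ∀ t, 0 < t → IsFiniteMeasure (ν t))
    (hnz : ∀ t, 0 < t → ν t (Ioi 0) ≠ 0) :
    IsIndefiniteIntegral (fun t => (ν t).real (Ioi 0)) fun t => -Ψ ((ν t).real (Ioi 0)) := by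
  have hmass := measureReal_Ioi_zero_pos hfin hnz
  have hlim (t : ℝ) (ht : 0 < t) :
      Tendsto (fun n : ℕ => laplaceExponent (ν t) (n + 1)) atTop (𝓝 ((ν t).real (Ioi 0))) :=
    have := hfin t ht
    tendsto_laplaceExponent_atTop.comp (tendsto_natCast_atTop_atTop.atTop_add tendsto_const_nhds)
  refine .of_tendsto (fun n : ℕ => hν (n + 1) n.cast_add_one_pos)
    (B := fun t => Ψ ((ν t).real (Ioi 0))) (fun s hs t ht hst => hΨ.monotoneOn (hmass t ht)
      (hmass s hs) (hν.antitoneOn_mass hΨ hfin hnz hs ht hst)) ?_ hlim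
    fun t ht => ((hΨ.continuousOn.continuousAt (Ioi_mem_nhds (hmass t ht))).tendsto.comp
      (hlim t ht)).neg
  refine Eventually.of_forall fun n t ht => ?_
  have := hfin t ht
  have hφ := laplaceExponent_pos (hnz t ht) (n.cast_add_one_pos (α := ℝ))
  rw [abs_neg, abs_of_nonneg (hΨ.nonneg hφ)]
  exact hΨ.monotoneOn hφ (hmass t ht) (laplaceExponent_le n.cast_add_one_pos.le)

lemma hasWeakEvolution_one (hν : SolvesLaplaceEquation Ψ ν) (hΨ : IsBranchingMechanism Ψ β π)
    (hfin : ∀ t, 0 < t → IsFiniteMeasure (ν t)) (hnz : ∀ t, 0 < t → ν t (Ioi 0) ≠ 0) :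
    HasWeakEvolution Ψ ν fun _ => 1 := by
  refine (hν.isIndefiniteIntegral_mass hΨ hfin hnz).congr (fun t _ => by simp) fun t ht => ?_
  have := hfin t ht
  exact (hΨ.Lform_one (measureReal_Ioi_zero_pos hfin hnz t ht)).symm

lemma hasWeakEvolution_one_sub_exp_neg_mul (hν : SolvesLaplaceEquation Ψ ν)
    (hΨ : IsBranchingMechanism Ψ β π) (hfin : ∀ t, 0 < t → IsFiniteMeasure (ν t))
    (hnz : ∀ t, 0 < t → ν t (Ioi 0) ≠ 0) {q : ℝ} (hq : 0 < q) :
    HasWeakEvolution Ψ ν fun x => 1 - Real.exp (-(q * x)) :=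
  (hν q hq).congr (fun _ _ => rfl) fun t ht =>
    have := hfin t ht
    (hΨ.Lform_one_sub_exp_neg_mul (hnz t ht) hq).symm

lemma hasWeakEvolution_polynomial (hν : SolvesLaplaceEquation Ψ ν)
    (hΨ : IsBranchingMechanism Ψ β π) (hfin : ∀ t, 0 < t → IsFiniteMeasure (ν t))
    (hnz : ∀ t, 0 < t → ν t (Ioi 0) ≠ 0) (p : Polynomial ℝ) :
    HasWeakEvolution Ψ ν fun x => p.eval (Real.exp (-x)) := by
  have hcomb {f g : ℝ → ℝ} := HasWeakEvolution.linear_combination (f := f) (g := g) hΨ hfin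
    (measureReal_Ioi_zero_pos hfin hnz)
  have hone := hν.hasWeakEvolution_one hΨ hfin hnz
  induction p using Polynomial.induction_on' with
  | add p r hp hr =>
    simpa using hcomb (isTestFun_comp_exp_neg p.continuous) (isTestFun_comp_exp_neg r.continuous)
      hp hr 1 1
  | monomial n a =>
    rcases n.eq_zero_or_pos with rfl | hn
    · simpa using hcomb isTestFun_one isTestFun_one hone hone a 0
    · have hn' : (0 : ℝ) < n := Nat.cast_pos.2 hn
      convert! hcomb isTestFun_one (isTestFun_one_sub_exp_neg_mul hn'.le) hone
        (hν.hasWeakEvolution_one_sub_exp_neg_mul hΨ hfin hnz hn') a (-a) using 2 with x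
      rw [Polynomial.eval_monomial, ← Real.exp_nat_mul]
      ring_nf

lemma hasWeakEvolution (hν : SolvesLaplaceEquation Ψ ν) (hΨ : IsBranchingMechanism Ψ β π)
    (hfin : ∀ t, 0 < t → IsFiniteMeasure (ν t)) (hnz : ∀ t, 0 < t → ν t (Ioi 0) ≠ 0)
    (hf : IsTestFun f) : HasWeakEvolution Ψ ν f := by
  have hmass := measureReal_Ioi_zero_pos hfin hnz
  obtain ⟨p, hp⟩ := hf.exists_polynomial_tendstoUniformlyOn
  have htest (n : ℕ) : IsTestFun fun x => (p n).eval (Real.exp (-x)) :=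
    isTestFun_comp_exp_neg (p n).continuous
  obtain ⟨M, hM⟩ := hf.2.1
  have hM0 : 0 ≤ M := (abs_nonneg _).trans (hM 1 (mem_Ioi.2 one_pos))
  have hrate : AntitoneOn (fun t => (ν t).real (Ioi 0) * deriv Ψ ((ν t).real (Ioi 0)) *
      (2 * (M + 1))) (Ioi 0) := fun s hs t ht hst => by
    have hle := hν.antitoneOn_mass hΨ hfin hnz hs ht hst
    have hderiv := hΨ.monotoneOn_deriv (hmass t ht) (hmass s hs) hle
    have := hΨ.deriv_nonneg (hmass t ht)
    beta_reduce at hle ⊢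
    gcongr
  refine .of_tendsto (fun n => hν.hasWeakEvolution_polynomial hΨ hfin hnz (p n)) hrate ?_
    (fun t ht => ?_) fun t ht => ?_
  · filter_upwards [eventually_abs_le_add_one_of_tendstoUniformlyOn hM hp] with n hn t ht
    have := hfin t ht
    exact hΨ.abs_Lform_le (hmass t ht) hn
  all_goals have := hfin t ht
  · exact tendsto_setIntegral_of_tendstoUniformlyOn htest hf hp
  · exact hΨ.tendsto_Lform (hmass t ht) htest hf hp

end SolvesLaplaceEquation

lemma isWeakSolution_iff_solvesLaplaceEquation (hΨ : IsBranchingMechanism Ψ β π)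
    (hfin : ∀ t, 0 < t → IsFiniteMeasure (ν t)) (hnz : ∀ t, 0 < t → ν t (Ioi 0) ≠ 0) :
    IsWeakSolution Ψ ν ↔ SolvesLaplaceEquation Ψ ν := by
  refine ⟨fun hweak q hq => ?_, fun hν f hf s t hs ht =>
    (hν.hasWeakEvolution hΨ hfin hnz hf s t hs ht).2⟩
  have hpos (t : ℝ) (ht : 0 < t) : 0 < laplaceExponent (ν t) q :=
    have := hfin t ht
    laplaceExponent_pos (hnz t ht) hq
  refine .of_integral_neg_comp (fun u hu => hΨ.nonneg hu) hΨ.monotoneOn hpos fun s t hs ht => ?_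
  have hLform : EqOn (fun τ => Lform Ψ (ν τ) fun x => 1 - Real.exp (-(q * x)))
      (fun τ => -Ψ (laplaceExponent (ν τ) q)) (uIcc s t) := fun τ hτ =>
    have hτ0 := uIcc_subset_Ioi_zero hs ht hτ
    have := hfin τ hτ0
    hΨ.Lform_one_sub_exp_neg_mul (hnz τ hτ0) hq
  rw [← intervalIntegral.integral_congr hLform]
  exact hweak _ (isTestFun_one_sub_exp_neg_mul hq.le) s t hs ht

theorem weak_solution_iff_laplace_ode_general (hΨ : IsBranchingMechanism Ψ β π)
    (hfin : ∀ t, 0 < t → IsFiniteMeasure (ν t)) (hnz : ∀ t, 0 < t → ν t (Ioi 0) ≠ 0) :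
    IsWeakSolution Ψ ν ↔ ∀ q, 0 < q → ∀ t, 0 < t →
      HasDerivAt (fun s => laplaceExponent (ν s) q) (-Ψ (laplaceExponent (ν t) q)) t := by
  rw [isWeakSolution_iff_solvesLaplaceEquation hΨ hfin hnz]
  refine forall₂_congr fun q hq =>
    IsIndefiniteIntegral.neg_comp_iff_hasDerivAt hΨ.continuousOn fun t ht => ?_
  have := hfin t ht
  exact laplaceExponent_pos (hnz t ht) hq

end Evolution

/-- `(ν_t)` is a weak solution of the generalized Smoluchowski
equation iff its Laplace exponent `φ(t,q) = ∫ (1-e^{-qx}) ν_t(dx)` satisfies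
`∂_t φ = -Ψ(φ)`. -/
theorem weak_solution_iff_laplace_ode
    (Ψ : ℝ → ℝ) (β : ℝ) (π : Measure ℝ)
    (hβ : 0 ≤ β)
    (hπfin : ∫⁻ x in Ioi (0:ℝ), ENNReal.ofReal (min x (x ^ 2)) ∂π < ⊤)
    (hΨ : ∀ u : ℝ, 0 < u →
      Ψ u = β * u ^ 2 + ∫ x in Ioi (0:ℝ), (Real.exp (-(u * x)) - 1 + u * x) ∂π)
    (ν : ℝ → Measure ℝ)
    (hfin : ∀ t : ℝ, 0 < t → IsFiniteMeasure (ν t))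
    (hnz : ∀ t : ℝ, 0 < t → ν t (Ioi 0) ≠ 0)
    (hconc : ∀ t : ℝ, 0 < t → ν t (Iic 0) = 0)
    (hmeas : ∀ f : ℝ → ℝ, IsTestFun f →
      Measurable fun t : ℝ => ∫ x in Ioi (0:ℝ), f x ∂(ν t)) :
    IsWeakSolution Ψ ν ↔
      ∀ q : ℝ, 0 < q → ∀ t : ℝ, 0 < t →
        HasDerivAt (fun s : ℝ => ∫ x in Ioi (0:ℝ), (1 - Real.exp (-(q * x))) ∂(ν s))
          (-Ψ (∫ x in Ioi (0:ℝ), (1 - Real.exp (-(q * x))) ∂(ν t))) t :=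
  weak_solution_iff_laplace_ode_general ⟨hβ, hπfin, hΨ⟩ hfin hnz
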